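/- Main theorem: for each r ∈ (0,∞) there exists a unique κ_r ∈ (0,∞) such that lim_{k→∞} (1/k) log Σ_{σ∈Ω_k} (μ_h(J_σ) ‖φ'_σ‖^r)^{κ_r/(r+κ_r)} = 0; setting q_r = κ_r/(r+κ_r), one has β(q_r) = r·q_r and κ_r = β(q_r)/(1 − q_r); the quantization dimension of order r of μ_h exists and equals κ_r, i.e., lim_{n→∞} r·log n / (− log V_{n,r}(μ_h)) = κ_r; moreover the κ_r-dimensional lower quantization coefficient of order r of μ_h is positive: liminf_{n→∞} n · V_{n,r}(μ_h)^{κ_r/r} > 0. -/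

import Mathlib

open MeasureTheory Filter Metric

noncomputable section

/-- A cookie-cutter system on `J = [0,1]`. -/
structure CookieCutter where
  N : ℕ
  hN : 2 ≤ N
  Jsub : Fin N → Set ℝ
  f : ℝ → ℝ
  φ : Fin N → ℝ → ℝ
  c : ℝ
  γ : ℝ
  b : ℝ
  B : ℝ
  hJsub_sub : ∀ j, Jsub j ⊆ Set.Icc 0 1
  hJsub_interval : ∀ j, ∃ u v : ℝ, u ≤ v ∧ Jsub j = Set.Icc u v
  hJsub_disj : ∀ i j, i ≠ j → Disjoint (Jsub i) (Jsub j)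
  hbij : ∀ j, Set.BijOn f (Jsub j) (Set.Icc 0 1)
  hφ_maps : ∀ j, ∀ x ∈ Set.Icc (0:ℝ) 1, φ j x ∈ Jsub j
  hφ_rinv : ∀ j, ∀ x ∈ Set.Icc (0:ℝ) 1, f (φ j x) = x
  hφ_linv : ∀ j, ∀ x ∈ Jsub j, φ j (f x) = x
  hfdiff : ∀ j, ∀ x ∈ Jsub j, DifferentiableAt ℝ f x
  hφdiff : ∀ j, ∀ x ∈ Set.Icc (0:ℝ) 1, DifferentiableAt ℝ (φ j) x
  hc : 0 < c
  hγ : γ ∈ Set.Ioc (0:ℝ) 1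
  hHolder : ∀ j, ∀ x ∈ Jsub j, ∀ y ∈ Jsub j, |deriv f x - deriv f y| ≤ c * |x - y| ^ γ
  hb : IsGLB ((fun x => |deriv f x|) '' ⋃ j, Jsub j) b
  hB : IsLUB ((fun x => |deriv f x|) '' ⋃ j, Jsub j) B
  hb1 : 1 < b

namespace CookieCutter

variable (cc : CookieCutter)

/-- `φ_σ = φ_{σ_1} ∘ ⋯ ∘ φ_{σ_n}` for a word `σ`. -/
def wordMap : List (Fin cc.N) → ℝ → ℝ
  | [] => id
  | j :: rest => cc.φ j ∘ wordMap rest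

/-- The basic interval `J_σ = φ_σ(J)`. -/
def Jc (σ : List (Fin cc.N)) : Set ℝ := cc.wordMap σ '' Set.Icc 0 1

/-- The diameter `|J_σ|`. -/
def diamJ (σ : List (Fin cc.N)) : ℝ := Metric.diam (cc.Jc σ)

/-- `‖φ'_σ‖ = sup_{x ∈ J} |φ'_σ(x)|`. -/
def φnorm (σ : List (Fin cc.N)) : ℝ :=
  sSup ((fun x => |deriv (cc.wordMap σ) x|) '' Set.Icc 0 1)

/-- The distortion constant `ξ = exp (c / (b^γ − 1))`. -/
def xi : ℝ := Real.exp (cc.c / (cc.b ^ cc.γ - 1))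

/-- The cookie-cutter set `E = ⋂_{n ≥ 1} ⋃_{σ ∈ Ω_n} J_σ`. -/
def E : Set ℝ := ⋂ (n : ℕ) (_ : 1 ≤ n), ⋃ σ : Fin n → Fin cc.N, cc.Jc (List.ofFn σ)

/-- `η = ξ^{9h}`. -/
def eta (h : ℝ) : ℝ := cc.xi ^ ((9:ℝ) * h)

/-- `L = η³ ξ^{3h}`. -/
def Lconst (h : ℝ) : ℝ := (cc.eta h) ^ 3 * cc.xi ^ ((3:ℝ) * h)

/-- A Gibbs-like measure for the cookie-cutter system: a Borel probability measure
supported on `E` with `η⁻¹|J_σ|^h ≤ μ(J_σ) ≤ η|J_σ|^h` for every word `σ`. -/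
def IsGibbsLike (μ : Measure ℝ) (h : ℝ) : Prop :=
  IsProbabilityMeasure μ ∧ μ (cc.Eᶜ) = 0 ∧
    ∀ σ : List (Fin cc.N), σ ≠ [] →
      (cc.eta h)⁻¹ * cc.diamJ σ ^ h ≤ (μ (cc.Jc σ)).toReal ∧
      (μ (cc.Jc σ)).toReal ≤ cc.eta h * cc.diamJ σ ^ h

/-- A finite maximal antichain in `Ω`. -/
def IsFMA (Γ : Finset (List (Fin cc.N))) : Prop :=
  (∀ σ ∈ Γ, σ ≠ []) ∧
  (∀ ω : ℕ → Fin cc.N, ∃ k : ℕ, 1 ≤ k ∧ (List.ofFn fun i : Fin k => ω i) ∈ Γ) ∧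
  ∀ σ ∈ Γ, ∀ τ ∈ Γ, σ <+: τ → σ = τ

end CookieCutter

/-- The `n`-th quantization error of order `r`. -/
def Vnr (μ : Measure ℝ) (n : ℕ) (r : ℝ) : ℝ :=
  sInf ((fun α : Finset ℝ => ∫ x, Metric.infDist x (α : Set ℝ) ^ r ∂μ) ''
    {α : Finset ℝ | α.Nonempty ∧ α.card ≤ n})

/-- The auxiliary quantization error `u_{n,r}` with `U = (0,1)`. -/
def unr (μ : Measure ℝ) (n : ℕ) (r : ℝ) : ℝ :=
  sInf ((fun α : Finset ℝ =>
      ∫ x, Metric.infDist x ((α : Set ℝ) ∪ (Set.Ioo (0:ℝ) 1)ᶜ) ^ r ∂μ) ''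
    {α : Finset ℝ | α.card ≤ n})


namespace CookieCutter

variable (cc : CookieCutter)

lemma b_pos : 0 < cc.b := zero_lt_one.trans cc.hb1

lemma φ_mem_Icc (j : Fin cc.N) {x : ℝ} (hx : x ∈ Set.Icc (0 : ℝ) 1) :
    cc.φ j x ∈ Set.Icc (0 : ℝ) 1 :=
  cc.hJsub_sub j (cc.hφ_maps j x hx)

lemma b_le_abs_deriv {j : Fin cc.N} {x : ℝ} (hx : x ∈ cc.Jsub j) : cc.b ≤ |deriv cc.f x| :=
  cc.hb.1 ⟨x, Set.mem_iUnion.2 ⟨j, hx⟩, rfl⟩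

lemma abs_deriv_le_B {j : Fin cc.N} {x : ℝ} (hx : x ∈ cc.Jsub j) : |deriv cc.f x| ≤ cc.B :=
  cc.hB.1 ⟨x, Set.mem_iUnion.2 ⟨j, hx⟩, rfl⟩

lemma one_lt_B : 1 < cc.B := by
  have hx := cc.hφ_maps ⟨0, by have := cc.hN; omega⟩ 0 (by simp)
  exact cc.hb1.trans_le ((cc.b_le_abs_deriv hx).trans (cc.abs_deriv_le_B hx))

lemma abs_deriv_φ (j : Fin cc.N) {x : ℝ} (hx : x ∈ Set.Icc (0 : ℝ) 1) :
    |deriv (cc.φ j) x| = |deriv cc.f (cc.φ j x)|⁻¹ := by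
  have h1 : HasDerivAt (cc.f ∘ cc.φ j) (deriv cc.f (cc.φ j x) * deriv (cc.φ j) x) x :=
    (cc.hfdiff j _ (cc.hφ_maps j x hx)).hasDerivAt.comp x (cc.hφdiff j x hx).hasDerivAt
  have h2 : HasDerivWithinAt (cc.f ∘ cc.φ j) 1 (Set.Icc 0 1) x :=
    (hasDerivWithinAt_id x _).congr (fun y hy => cc.hφ_rinv j y hy) (cc.hφ_rinv j x hx)
  have h3 := (uniqueDiffOn_Icc (zero_lt_one' ℝ) x hx).eq_deriv _ h1.hasDerivWithinAt h2
  rw [← abs_inv]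
  congr 1
  exact eq_inv_of_mul_eq_one_right h3

lemma abs_deriv_φ_le (j : Fin cc.N) {x : ℝ} (hx : x ∈ Set.Icc (0 : ℝ) 1) :
    |deriv (cc.φ j) x| ≤ cc.b⁻¹ := by
  rw [cc.abs_deriv_φ j hx]
  exact inv_anti₀ cc.b_pos (cc.b_le_abs_deriv (cc.hφ_maps j x hx))

lemma le_abs_deriv_φ (j : Fin cc.N) {x : ℝ} (hx : x ∈ Set.Icc (0 : ℝ) 1) :
    cc.B⁻¹ ≤ |deriv (cc.φ j) x| := by
  rw [cc.abs_deriv_φ j hx]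
  exact inv_anti₀ (cc.b_pos.trans_le (cc.b_le_abs_deriv (cc.hφ_maps j x hx)))
    (cc.abs_deriv_le_B (cc.hφ_maps j x hx))

lemma wordMap_mem (σ : List (Fin cc.N)) {x : ℝ} (hx : x ∈ Set.Icc (0 : ℝ) 1) :
    cc.wordMap σ x ∈ Set.Icc (0 : ℝ) 1 := by
  induction σ with
  | nil => exact hx
  | cons j σ ih => exact cc.φ_mem_Icc j ih

lemma wordMap_append (σ τ : List (Fin cc.N)) :
    cc.wordMap (σ ++ τ) = cc.wordMap σ ∘ cc.wordMap τ := by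
  induction σ with
  | nil => rfl
  | cons j σ ih => simp [wordMap, ih, Function.comp_assoc]

lemma differentiableAt_wordMap (σ : List (Fin cc.N)) {x : ℝ} (hx : x ∈ Set.Icc (0 : ℝ) 1) :
    DifferentiableAt ℝ (cc.wordMap σ) x := by
  induction σ with
  | nil => exact differentiableAt_id
  | cons j σ ih => exact (cc.hφdiff j _ (cc.wordMap_mem σ hx)).comp x ih

lemma abs_deriv_wordMap_append (σ τ : List (Fin cc.N)) {x : ℝ} (hx : x ∈ Set.Icc (0 : ℝ) 1) :
    |deriv (cc.wordMap (σ ++ τ)) x| =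
      |deriv (cc.wordMap σ) (cc.wordMap τ x)| * |deriv (cc.wordMap τ) x| := by
  rw [wordMap_append, ← abs_mul, deriv_comp x
    (cc.differentiableAt_wordMap σ (cc.wordMap_mem τ hx)) (cc.differentiableAt_wordMap τ hx)]

lemma wordMap_singleton (j : Fin cc.N) : cc.wordMap [j] = cc.φ j := rfl

lemma abs_deriv_wordMap_cons (j : Fin cc.N) (σ : List (Fin cc.N)) {x : ℝ}
    (hx : x ∈ Set.Icc (0 : ℝ) 1) :
    |deriv (cc.wordMap (j :: σ)) x| =
      |deriv (cc.φ j) (cc.wordMap σ x)| * |deriv (cc.wordMap σ) x| :=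
  cc.abs_deriv_wordMap_append [j] σ hx

lemma abs_deriv_wordMap_le (σ : List (Fin cc.N)) {x : ℝ} (hx : x ∈ Set.Icc (0 : ℝ) 1) :
    |deriv (cc.wordMap σ) x| ≤ cc.b⁻¹ ^ σ.length := by
  induction σ with
  | nil => simp [wordMap]
  | cons j σ ih =>
    rw [cc.abs_deriv_wordMap_cons j σ hx, List.length_cons, pow_succ']
    exact mul_le_mul (cc.abs_deriv_φ_le j (cc.wordMap_mem σ hx)) ih (abs_nonneg _)
      (inv_nonneg.2 cc.b_pos.le)

lemma abs_deriv_wordMap_pos (σ : List (Fin cc.N)) {x : ℝ} (hx : x ∈ Set.Icc (0 : ℝ) 1) :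
    0 < |deriv (cc.wordMap σ) x| := by
  induction σ with
  | nil => simp [wordMap]
  | cons j σ ih =>
    rw [cc.abs_deriv_wordMap_cons j σ hx]
    exact mul_pos ((inv_pos.2 (zero_lt_one.trans cc.one_lt_B)).trans_le
      (cc.le_abs_deriv_φ j (cc.wordMap_mem σ hx))) ih

lemma bddAbove_abs_deriv (σ : List (Fin cc.N)) :
    BddAbove ((fun x => |deriv (cc.wordMap σ) x|) '' Set.Icc 0 1) := by
  refine ⟨cc.b⁻¹ ^ σ.length, ?_⟩
  rintro _ ⟨x, hx, rfl⟩
  exact cc.abs_deriv_wordMap_le σ hx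

lemma abs_deriv_le_φnorm (σ : List (Fin cc.N)) {x : ℝ} (hx : x ∈ Set.Icc (0 : ℝ) 1) :
    |deriv (cc.wordMap σ) x| ≤ cc.φnorm σ :=
  le_csSup (cc.bddAbove_abs_deriv σ) ⟨x, hx, rfl⟩

lemma φnorm_le_of_forall (σ : List (Fin cc.N)) {M : ℝ}
    (hM : ∀ x ∈ Set.Icc (0 : ℝ) 1, |deriv (cc.wordMap σ) x| ≤ M) : cc.φnorm σ ≤ M := by
  refine csSup_le ⟨_, 0, by simp, rfl⟩ ?_
  rintro _ ⟨x, hx, rfl⟩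
  exact hM x hx

lemma φnorm_pos (σ : List (Fin cc.N)) : 0 < cc.φnorm σ :=
  (cc.abs_deriv_wordMap_pos σ (x := 0) (by simp)).trans_le (cc.abs_deriv_le_φnorm σ (by simp))

lemma φnorm_le_pow (σ : List (Fin cc.N)) : cc.φnorm σ ≤ cc.b⁻¹ ^ σ.length :=
  cc.φnorm_le_of_forall σ fun _ hx => cc.abs_deriv_wordMap_le σ hx

lemma φnorm_nil : cc.φnorm [] = 1 := by
  refine le_antisymm (by simpa using cc.φnorm_le_pow []) ?_
  simpa [wordMap] using cc.abs_deriv_le_φnorm [] (x := 0) (by simp)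

lemma abs_wordMap_sub_le (σ : List (Fin cc.N)) {x y : ℝ} (hx : x ∈ Set.Icc (0 : ℝ) 1)
    (hy : y ∈ Set.Icc (0 : ℝ) 1) :
    |cc.wordMap σ x - cc.wordMap σ y| ≤ cc.φnorm σ * |x - y| :=
  (convex_Icc (0 : ℝ) 1).norm_image_sub_le_of_norm_deriv_le
    (fun _ hz => cc.differentiableAt_wordMap σ hz)
    (fun _ hz => cc.abs_deriv_le_φnorm σ hz) hy hx

lemma abs_sub_le_one {x y : ℝ} (hx : x ∈ Set.Icc (0 : ℝ) 1) (hy : y ∈ Set.Icc (0 : ℝ) 1) :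
    |x - y| ≤ 1 :=
  abs_sub_le_iff.2 ⟨by linarith [hx.2, hy.1], by linarith [hx.1, hy.2]⟩

lemma abs_deriv_f_le_exp_mul {j : Fin cc.N} {x y : ℝ} (hx : x ∈ cc.Jsub j) (hy : y ∈ cc.Jsub j) :
    |deriv cc.f x| ≤ Real.exp (cc.c * |x - y| ^ cc.γ) * |deriv cc.f y| := by
  have h1 := cc.hHolder j x hx y hy
  have h2 : 1 ≤ |deriv cc.f y| := cc.hb1.le.trans (cc.b_le_abs_deriv hy)
  have h3 := abs_sub_abs_le_abs_sub (deriv cc.f x) (deriv cc.f y)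
  have h4 := Real.add_one_le_exp (cc.c * |x - y| ^ cc.γ)
  have h5 : 0 ≤ cc.c * |x - y| ^ cc.γ :=
    mul_nonneg cc.hc.le (Real.rpow_nonneg (abs_nonneg _) _)
  nlinarith

lemma one_lt_b_rpow : 1 < cc.b ^ cc.γ := Real.one_lt_rpow cc.hb1 cc.hγ.1

lemma one_le_xi : 1 ≤ cc.xi :=
  Real.one_le_exp (div_nonneg cc.hc.le (sub_nonneg.2 cc.one_lt_b_rpow.le))

lemma xi_pos : 0 < cc.xi := Real.exp_pos _

lemma abs_deriv_wordMap_le_exp_mul (σ : List (Fin cc.N)) {x y : ℝ} (hx : x ∈ Set.Icc (0 : ℝ) 1)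
    (hy : y ∈ Set.Icc (0 : ℝ) 1) :
    |deriv (cc.wordMap σ) x| ≤
      Real.exp (cc.c * ((1 - (cc.b ^ cc.γ)⁻¹ ^ σ.length) / (cc.b ^ cc.γ - 1))) *
        |deriv (cc.wordMap σ) y| := by
  induction σ with
  | nil => simp [wordMap]
  | cons j σ ih =>
    have hx' := cc.wordMap_mem σ hx
    have hy' := cc.wordMap_mem σ hy
    have hX := cc.hφ_maps j _ hx'
    have hY := cc.hφ_maps j _ hy'
    rw [cc.abs_deriv_wordMap_cons j σ hx, cc.abs_deriv_wordMap_cons j σ hy,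
      cc.abs_deriv_φ j hx', cc.abs_deriv_φ j hy']
    have hfX : 0 < |deriv cc.f (cc.φ j (cc.wordMap σ x))| :=
      cc.b_pos.trans_le (cc.b_le_abs_deriv hX)
    have hfY : 0 < |deriv cc.f (cc.φ j (cc.wordMap σ y))| :=
      cc.b_pos.trans_le (cc.b_le_abs_deriv hY)
    have hd := cc.abs_deriv_f_le_exp_mul hY hX
    set s := (cc.b ^ cc.γ)⁻¹ with hs
    have hb := cc.one_lt_b_rpow
    have hdist : |cc.φ j (cc.wordMap σ y) - cc.φ j (cc.wordMap σ x)| ^ cc.γ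
        ≤ s ^ (σ.length + 1) := by
      have h1 : |cc.φ j (cc.wordMap σ y) - cc.φ j (cc.wordMap σ x)|
          ≤ cc.b⁻¹ ^ (σ.length + 1) := by
        have h2 := cc.abs_wordMap_sub_le (j :: σ) hy hx
        have h3 := cc.φnorm_le_pow (j :: σ)
        rw [List.length_cons] at h3
        have h4 := abs_sub_le_one hy hx
        have h5 := (cc.φnorm_pos (j :: σ)).le
        calc _ ≤ cc.φnorm (j :: σ) * |y - x| := h2
          _ ≤ cc.φnorm (j :: σ) * 1 := by gcongr
          _ ≤ _ := by rw [mul_one]; exact h3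
      calc _ ≤ (cc.b⁻¹ ^ (σ.length + 1)) ^ cc.γ :=
            Real.rpow_le_rpow (abs_nonneg _) h1 cc.hγ.1.le
        _ = s ^ (σ.length + 1) := by
            rw [hs, ← Real.inv_rpow cc.b_pos.le, ← Real.rpow_natCast, ← Real.rpow_natCast,
              ← Real.rpow_mul (inv_nonneg.2 cc.b_pos.le),
              ← Real.rpow_mul (inv_nonneg.2 cc.b_pos.le), mul_comm]
    have hexp : cc.c * ((1 - s ^ (σ.length + 1)) / (cc.b ^ cc.γ - 1)) =
        cc.c * s ^ (σ.length + 1) + cc.c * ((1 - s ^ σ.length) / (cc.b ^ cc.γ - 1)) := by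
      have hne : cc.b ^ cc.γ - 1 ≠ 0 := by linarith
      have hsb : s ^ (σ.length + 1) * cc.b ^ cc.γ = s ^ σ.length := by
        rw [pow_succ, mul_assoc, hs, inv_mul_cancel₀ (by linarith), mul_one]
      rw [← hsb, pow_succ]
      field_simp
      ring
    have hinv : |deriv cc.f (cc.φ j (cc.wordMap σ x))|⁻¹ ≤
        Real.exp (cc.c * s ^ (σ.length + 1)) *
          |deriv cc.f (cc.φ j (cc.wordMap σ y))|⁻¹ := by
      rw [← div_eq_mul_inv, inv_eq_one_div, div_le_div_iff₀ hfX hfY, one_mul]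
      refine hd.trans ?_
      have := cc.hc.le
      gcongr
    rw [List.length_cons, hexp, Real.exp_add]
    calc _ ≤ (Real.exp (cc.c * s ^ (σ.length + 1)) *
          |deriv cc.f (cc.φ j (cc.wordMap σ y))|⁻¹) *
          (Real.exp (cc.c * ((1 - s ^ σ.length) / (cc.b ^ cc.γ - 1))) *
            |deriv (cc.wordMap σ) y|) :=
          mul_le_mul hinv ih (abs_nonneg _) (by positivity)
      _ = _ := by ring

/-- Bounded distortion. -/
lemma φnorm_le_xi_mul (σ : List (Fin cc.N)) {x : ℝ} (hx : x ∈ Set.Icc (0 : ℝ) 1) :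
    cc.φnorm σ ≤ cc.xi * |deriv (cc.wordMap σ) x| := by
  refine cc.φnorm_le_of_forall σ fun y hy => (cc.abs_deriv_wordMap_le_exp_mul σ hy hx).trans ?_
  have hb := sub_pos.2 cc.one_lt_b_rpow
  have hc := cc.hc.le
  have hs : 0 ≤ (cc.b ^ cc.γ)⁻¹ ^ σ.length :=
    pow_nonneg (inv_nonneg.2 (zero_lt_one.trans cc.one_lt_b_rpow).le) _
  unfold xi
  rw [div_eq_mul_one_div cc.c (cc.b ^ cc.γ - 1)]
  gcongr
  linarith

lemma φnorm_mul_abs_sub_le (σ : List (Fin cc.N)) {x y : ℝ} (hx : x ∈ Set.Icc (0 : ℝ) 1)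
    (hy : y ∈ Set.Icc (0 : ℝ) 1) :
    cc.φnorm σ * |x - y| ≤ cc.xi * |cc.wordMap σ x - cc.wordMap σ y| := by
  wlog hxy : x < y generalizing x y
  · rcases eq_or_lt_of_le (not_lt.1 hxy) with rfl | hlt
    · simp
    · rw [abs_sub_comm, abs_sub_comm (cc.wordMap σ x)]
      exact this hy hx hlt
  have hsub : Set.Icc x y ⊆ Set.Icc (0 : ℝ) 1 := Set.Icc_subset_Icc hx.1 hy.2
  obtain ⟨z, hz, hz'⟩ := exists_deriv_eq_slope (cc.wordMap σ) hxy
    (fun w hw => (cc.differentiableAt_wordMap σ (hsub hw)).continuousAt.continuousWithinAt)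
    (fun w hw => (cc.differentiableAt_wordMap σ
      (hsub (Set.Ioo_subset_Icc_self hw))).differentiableWithinAt)
  have hd := cc.φnorm_le_xi_mul σ (hsub (Set.Ioo_subset_Icc_self hz))
  have hpos : 0 < |y - x| := abs_pos.2 (by linarith)
  rw [hz', abs_div] at hd
  rw [abs_sub_comm x, abs_sub_comm (cc.wordMap σ x)]
  calc _ ≤ cc.xi * (|cc.wordMap σ y - cc.wordMap σ x| / |y - x|) * |y - x| := by gcongr
    _ = _ := by field_simp

lemma φnorm_append_le (σ τ : List (Fin cc.N)) : cc.φnorm (σ ++ τ) ≤ cc.φnorm σ := by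
  refine cc.φnorm_le_of_forall _ fun x hx => ?_
  rw [cc.abs_deriv_wordMap_append σ τ hx]
  have h1 := cc.abs_deriv_le_φnorm σ (cc.wordMap_mem τ hx)
  have h2 : |deriv (cc.wordMap τ) x| ≤ 1 := (cc.abs_deriv_wordMap_le τ hx).trans
    (pow_le_one₀ (inv_nonneg.2 cc.b_pos.le) (inv_le_one_of_one_le₀ cc.hb1.le))
  exact (mul_le_of_le_one_right (abs_nonneg _) h2).trans h1

lemma φnorm_le_mul_φnorm_concat (σ : List (Fin cc.N)) (j : Fin cc.N) :
    cc.φnorm σ ≤ cc.xi * cc.B * cc.φnorm (σ ++ [j]) := by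
  have h0 : (0 : ℝ) ∈ Set.Icc (0 : ℝ) 1 := by simp
  have h1 := cc.abs_deriv_le_φnorm (σ ++ [j]) h0
  rw [cc.abs_deriv_wordMap_append σ [j] h0, cc.wordMap_singleton] at h1
  have h2 := cc.φnorm_le_xi_mul σ (cc.φ_mem_Icc j h0)
  have h3 := cc.le_abs_deriv_φ j h0
  have hB := zero_lt_one.trans cc.one_lt_B
  have hxi := cc.xi_pos
  calc _ ≤ cc.xi * |deriv (cc.wordMap σ) (cc.φ j 0)| := h2
    _ = cc.xi * cc.B * (|deriv (cc.wordMap σ) (cc.φ j 0)| * cc.B⁻¹) := by field_simp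
    _ ≤ cc.xi * cc.B * (|deriv (cc.wordMap σ) (cc.φ j 0)| * |deriv (cc.φ j) 0|) := by gcongr
    _ ≤ _ := by gcongr

lemma isCompact_Jc (σ : List (Fin cc.N)) : IsCompact (cc.Jc σ) :=
  isCompact_Icc.image_of_continuousOn fun _ hx =>
    (cc.differentiableAt_wordMap σ hx).continuousAt.continuousWithinAt

lemma Jc_subset_Icc (σ : List (Fin cc.N)) : cc.Jc σ ⊆ Set.Icc 0 1 := by
  rintro _ ⟨x, hx, rfl⟩
  exact cc.wordMap_mem σ hx

lemma Jc_append_subset (σ τ : List (Fin cc.N)) : cc.Jc (σ ++ τ) ⊆ cc.Jc σ := by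
  rintro _ ⟨x, hx, rfl⟩
  exact ⟨cc.wordMap τ x, cc.wordMap_mem τ hx, by rw [wordMap_append]; rfl⟩

lemma diamJ_le_φnorm (σ : List (Fin cc.N)) : cc.diamJ σ ≤ cc.φnorm σ := by
  refine Metric.diam_le_of_forall_dist_le (cc.φnorm_pos σ).le ?_
  rintro _ ⟨x, hx, rfl⟩ _ ⟨y, hy, rfl⟩
  exact (cc.abs_wordMap_sub_le σ hx hy).trans
    (mul_le_of_le_one_right (cc.φnorm_pos σ).le (abs_sub_le_one hx hy))

lemma φnorm_le_xi_mul_diamJ (σ : List (Fin cc.N)) : cc.φnorm σ ≤ cc.xi * cc.diamJ σ := by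
  have h0 : (0 : ℝ) ∈ Set.Icc (0 : ℝ) 1 := by simp
  have h1 : (1 : ℝ) ∈ Set.Icc (0 : ℝ) 1 := by simp
  have h2 := cc.φnorm_mul_abs_sub_le σ h1 h0
  have h3 : |cc.wordMap σ 1 - cc.wordMap σ 0| ≤ cc.diamJ σ :=
    Metric.dist_le_diam_of_mem (cc.isCompact_Jc σ).isBounded ⟨1, h1, rfl⟩ ⟨0, h0, rfl⟩
  have := cc.xi_pos
  calc _ = cc.φnorm σ * |(1 : ℝ) - 0| := by simp
    _ ≤ _ := h2
    _ ≤ _ := by gcongr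

lemma exists_separation : ∃ δ : ℝ, 0 < δ ∧ ∀ i j, i ≠ j →
    ∀ x ∈ cc.Jsub i, ∀ y ∈ cc.Jsub j, δ ≤ |x - y| := by
  have key : ∀ p : Fin cc.N × Fin cc.N, ∃ δ : ℝ, 0 < δ ∧ (p.1 ≠ p.2 →
      ∀ x ∈ cc.Jsub p.1, ∀ y ∈ cc.Jsub p.2, δ ≤ |x - y|) := by
    rintro ⟨i, j⟩
    by_cases hij : i = j
    · exact ⟨1, one_pos, fun h => absurd hij h⟩
    obtain ⟨u, v, -, hi⟩ := cc.hJsub_interval i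
    obtain ⟨u', v', -, hj⟩ := cc.hJsub_interval j
    obtain ⟨δ, hδ, hdis⟩ := (cc.hJsub_disj i j hij).exists_thickenings
      (hi ▸ isCompact_Icc) (hj ▸ isClosed_Icc)
    refine ⟨δ, hδ, fun _ x hx y hy => ?_⟩
    by_contra! hlt
    exact Set.disjoint_left.1 hdis (Metric.mem_thickening_iff.2 ⟨x, hx, by
      rwa [dist_comm, Real.dist_eq]⟩) (Metric.self_subset_thickening hδ _ hy)
  choose g hg hg' using key
  have : Nonempty (Fin cc.N) := ⟨⟨0, by have := cc.hN; omega⟩⟩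
  obtain ⟨p, hp⟩ := Finite.exists_min g
  exact ⟨g p, hg p, fun i j hij x hx y hy => (hp (i, j)).trans (hg' (i, j) hij x hx y hy)⟩

lemma exists_split_of_ne {α : Type*} : ∀ {σ τ : List α}, σ.length = τ.length → σ ≠ τ →
    ∃ ω i j u v, i ≠ j ∧ σ = ω ++ i :: u ∧ τ = ω ++ j :: v
  | [], [], _, h => absurd rfl h
  | i :: σ, j :: τ, hl, h => by
    by_cases hij : i = j
    · subst hij
      obtain ⟨ω, a, b, u, v, hab, rfl, rfl⟩ :=
        exists_split_of_ne (σ := σ) (τ := τ) (by simpa using hl) (fun hh => h (by rw [hh]))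
      exact ⟨i :: ω, a, b, u, v, hab, rfl, rfl⟩
    · exact ⟨[], i, j, σ, τ, hij, rfl, rfl⟩

lemma mem_Jc_append_cons {ω u : List (Fin cc.N)} {i : Fin cc.N} {x : ℝ}
    (hx : x ∈ cc.Jc (ω ++ i :: u)) : ∃ y ∈ cc.Jsub i, x = cc.wordMap ω y := by
  obtain ⟨z, hz, rfl⟩ := hx
  exact ⟨cc.φ i (cc.wordMap u z), cc.hφ_maps i _ (cc.wordMap_mem u hz), by
    rw [wordMap_append]; rfl⟩

lemma separation_of_ne {δ : ℝ} (hδ : 0 < δ)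
    (hsep : ∀ i j, i ≠ j → ∀ x ∈ cc.Jsub i, ∀ y ∈ cc.Jsub j, δ ≤ |x - y|)
    {σ τ : List (Fin cc.N)} (hl : σ.length = τ.length) (hne : σ ≠ τ) {x y : ℝ}
    (hx : x ∈ cc.Jc σ) (hy : y ∈ cc.Jc τ) : cc.φnorm σ * δ ≤ cc.xi * |x - y| := by
  obtain ⟨ω, i, j, u, v, hij, rfl, rfl⟩ := exists_split_of_ne hl hne
  obtain ⟨x', hx', rfl⟩ := cc.mem_Jc_append_cons hx
  obtain ⟨y', hy', rfl⟩ := cc.mem_Jc_append_cons hy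
  have h1 := cc.φnorm_mul_abs_sub_le ω (cc.hJsub_sub i hx') (cc.hJsub_sub j hy')
  have h2 := hsep i j hij x' hx' y' hy'
  have h3 := cc.φnorm_append_le ω (i :: u)
  have h4 := cc.φnorm_pos ω
  exact (mul_le_mul h3 h2 hδ.le h4.le).trans h1

lemma exists_prefix_φnorm {ε : ℝ} (hε : ε ≤ 1) (σ : List (Fin cc.N)) (hσ : cc.φnorm σ < ε) :
    ∃ τ, τ <+: σ ∧ τ ≠ [] ∧ cc.φnorm τ < ε ∧ ε ≤ cc.xi * cc.B * cc.φnorm τ := by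
  induction σ using List.reverseRecOn with
  | nil => rw [φnorm_nil] at hσ; exact absurd hσ (not_lt.2 hε)
  | append_singleton σ j ih =>
    by_cases h : cc.φnorm σ < ε
    · obtain ⟨τ, h1, h2⟩ := ih h
      exact ⟨τ, h1.trans (List.prefix_append _ _), h2⟩
    · exact ⟨σ ++ [j], List.prefix_refl _, by simp, hσ,
        (not_lt.1 h).trans (cc.φnorm_le_mul_φnorm_concat σ j)⟩

lemma exists_mem_Jc_of_mem_E {x : ℝ} (hx : x ∈ cc.E) {n : ℕ} (hn : 1 ≤ n) :
    ∃ σ : List (Fin cc.N), σ.length = n ∧ x ∈ cc.Jc σ := by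
  obtain ⟨σ, hσ⟩ := Set.mem_iUnion.1 (Set.mem_iInter₂.1 hx n hn)
  exact ⟨List.ofFn σ, by simp, hσ⟩

lemma E_subset_Icc : cc.E ⊆ Set.Icc 0 1 := fun _ hx => by
  obtain ⟨σ, -, hσ⟩ := cc.exists_mem_Jc_of_mem_E hx le_rfl
  exact cc.Jc_subset_Icc σ hσ

lemma exists_scale_of_mem_E {x ε : ℝ} (hx : x ∈ cc.E) (hε0 : 0 < ε) (hε : ε ≤ 1) :
    ∃ τ : List (Fin cc.N), x ∈ cc.Jc τ ∧ τ ≠ [] ∧ cc.φnorm τ < ε ∧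
      ε ≤ cc.xi * cc.B * cc.φnorm τ := by
  obtain ⟨n, hn⟩ := exists_pow_lt_of_lt_one hε0 (inv_lt_one_of_one_lt₀ cc.hb1)
  obtain ⟨σ, hl, hxσ⟩ := cc.exists_mem_Jc_of_mem_E hx (n := n + 1) (by omega)
  have hσ : cc.φnorm σ < ε := by
    refine (cc.φnorm_le_pow σ).trans_lt (lt_of_le_of_lt ?_ hn)
    rw [hl]
    exact pow_le_pow_of_le_one (inv_nonneg.2 cc.b_pos.le) (inv_le_one_of_one_le₀ cc.hb1.le)
      (by omega)
  obtain ⟨τ, ⟨u, rfl⟩, h⟩ := cc.exists_prefix_φnorm hε σ hσ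
  exact ⟨τ, cc.Jc_append_subset τ u hxσ, h⟩

lemma gibbs_le {μ : Measure ℝ} {h : ℝ} (hh : 0 < h) (hμ : cc.IsGibbsLike μ h)
    {σ : List (Fin cc.N)} (hσ : σ ≠ []) : μ.real (cc.Jc σ) ≤ cc.eta h * cc.φnorm σ ^ h := by
  refine (hμ.2.2 σ hσ).2.trans ?_
  have h1 : 0 ≤ cc.eta h := Real.rpow_nonneg cc.xi_pos.le _
  have h2 := cc.diamJ_le_φnorm σ
  have h3 : 0 ≤ cc.diamJ σ := Metric.diam_nonneg
  gcongr

lemma le_gibbs {μ : Measure ℝ} {h : ℝ} (hh : 0 < h) (hμ : cc.IsGibbsLike μ h)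
    {σ : List (Fin cc.N)} (hσ : σ ≠ []) :
    (cc.eta h * cc.xi ^ h)⁻¹ * cc.φnorm σ ^ h ≤ μ.real (cc.Jc σ) := by
  refine le_trans ?_ (hμ.2.2 σ hσ).1
  have hx := cc.xi_pos
  have h1 : 0 < cc.eta h := Real.rpow_pos_of_pos hx _
  have h3 : 0 ≤ cc.diamJ σ := Metric.diam_nonneg
  have h2 : cc.φnorm σ ^ h ≤ cc.xi ^ h * cc.diamJ σ ^ h := by
    rw [← Real.mul_rpow hx.le h3]
    exact Real.rpow_le_rpow (cc.φnorm_pos σ).le (cc.φnorm_le_xi_mul_diamJ σ) hh.le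
  have h4 : 0 < cc.xi ^ h := Real.rpow_pos_of_pos hx _
  rw [mul_inv, mul_assoc]
  gcongr
  rwa [inv_mul_le_iff₀ h4]

lemma exists_measure_closedBall_le {μ : Measure ℝ} {h : ℝ} (hh : 0 < h)
    (hμ : cc.IsGibbsLike μ h) :
    ∃ C : ℝ, 0 < C ∧ ∀ x ρ : ℝ, 0 < ρ → μ.real (closedBall x ρ) ≤ C * ρ ^ h := by
  have := hμ.1
  obtain ⟨δ, hδ, hsep⟩ := cc.exists_separation
  have hxi := cc.xi_pos
  have hB := zero_lt_one.trans cc.one_lt_B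
  have heta : 1 ≤ cc.eta h := Real.one_le_rpow cc.one_le_xi (by positivity)
  set M : ℝ := 3 * cc.xi * (cc.xi * cc.B) / δ with hM
  have hM0 : 0 < M := by positivity
  refine ⟨cc.eta h * M ^ h, by positivity, fun x ρ hρ => ?_⟩
  have hC : cc.eta h * M ^ h * ρ ^ h = cc.eta h * (M * ρ) ^ h := by
    rw [Real.mul_rpow hM0.le hρ.le, mul_assoc]
  rw [hC]
  rcases lt_or_ge 1 (M * ρ) with hbig | hsmall
  · calc μ.real (closedBall x ρ) ≤ 1 := measureReal_le_one
      _ ≤ (M * ρ) ^ h := Real.one_le_rpow hbig.le hh.le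
      _ ≤ _ := le_mul_of_one_le_left (by positivity) heta
  have hE : μ.real (closedBall x ρ) ≤ μ.real (closedBall x ρ ∩ cc.E) := by
    refine ENNReal.toReal_mono (measure_ne_top _ _) ?_
    rw [measure_inter_conull hμ.2.1]
  refine hE.trans ?_
  rcases (closedBall x ρ ∩ cc.E).eq_empty_or_nonempty with he | ⟨y, hyb, hyE⟩
  · rw [he, measureReal_empty]; positivity
  obtain ⟨τ, hyτ, hτ, hlt, hle⟩ := cc.exists_scale_of_mem_E hyE (by positivity) hsmall
  have hsub : closedBall x ρ ∩ cc.E ⊆ cc.Jc τ := by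
    rintro z ⟨hzb, hzE⟩
    obtain ⟨τ', hl, hzτ'⟩ := cc.exists_mem_Jc_of_mem_E hzE (n := τ.length)
      (List.length_pos_iff.2 hτ)
    by_cases hne : τ = τ'
    · rwa [hne]
    exfalso
    have h1 := cc.separation_of_ne hδ hsep hl.symm hne hyτ hzτ'
    have h2 : |y - z| ≤ 2 * ρ := by
      rw [mem_closedBall, Real.dist_eq, abs_le] at hyb hzb
      rw [abs_le]
      constructor <;> linarith [hyb.1, hyb.2, hzb.1, hzb.2]
    have h3 : 3 * cc.xi * ρ ≤ cc.φnorm τ * δ := by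
      have h4 : M * ρ * δ ≤ cc.xi * cc.B * cc.φnorm τ * δ := by gcongr
      have h5 : M * ρ * δ = (cc.xi * cc.B) * (3 * cc.xi * ρ) := by
        rw [hM]; field_simp
      rw [h5, mul_assoc (cc.xi * cc.B)] at h4
      exact le_of_mul_le_mul_left h4 (by positivity)
    have h6 : cc.xi * |y - z| ≤ cc.xi * (2 * ρ) := by gcongr
    nlinarith [mul_pos hxi hρ]
  calc _ ≤ μ.real (cc.Jc τ) := measureReal_mono hsub
    _ ≤ cc.eta h * cc.φnorm τ ^ h := cc.gibbs_le hh hμ hτ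
    _ ≤ _ := by
      have := (cc.φnorm_pos τ).le
      gcongr

lemma exists_le_measure_ball {μ : Measure ℝ} {h : ℝ} (hh : 0 < h) (hμ : cc.IsGibbsLike μ h) :
    ∃ C : ℝ, 0 < C ∧ ∀ x ∈ cc.E, ∀ ρ : ℝ, 0 < ρ → ρ ≤ 1 → C * ρ ^ h ≤ μ.real (ball x ρ) := by
  have := hμ.1
  have hxi := cc.xi_pos
  have hB := zero_lt_one.trans cc.one_lt_B
  have heta : 0 < cc.eta h := Real.rpow_pos_of_pos hxi _
  refine ⟨(cc.eta h * cc.xi ^ h)⁻¹ * ((cc.xi * cc.B) ^ h)⁻¹, by positivity,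
    fun x hx ρ hρ hρ1 => ?_⟩
  obtain ⟨τ, hxτ, hτ, hlt, hle⟩ := cc.exists_scale_of_mem_E hx hρ hρ1
  have hsub : cc.Jc τ ⊆ ball x ρ := fun y hy =>
    mem_ball.2 (((Metric.dist_le_diam_of_mem (cc.isCompact_Jc τ).isBounded hy hxτ).trans
      (cc.diamJ_le_φnorm τ)).trans_lt hlt)
  refine le_trans ?_ (measureReal_mono hsub)
  refine le_trans ?_ (cc.le_gibbs hh hμ hτ)
  have h1 : ρ ^ h ≤ (cc.xi * cc.B) ^ h * cc.φnorm τ ^ h := by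
    rw [← Real.mul_rpow (by positivity) (cc.φnorm_pos τ).le]
    gcongr
  rw [mul_assoc]
  gcongr
  rwa [inv_mul_le_iff₀ (by positivity)]

end CookieCutter

lemma integrable_infDist_rpow {μ : Measure ℝ} [IsProbabilityMeasure μ]
    (hμ : μ (Set.Icc 0 1)ᶜ = 0) {r : ℝ} (hr : 0 < r) (s : Set ℝ) :
    Integrable (fun x => infDist x s ^ r) μ := by
  have hc : Continuous fun x => infDist x s ^ r :=
    (continuous_infDist_pt s).rpow_const fun _ => Or.inr hr.le
  obtain ⟨M, hM⟩ := isCompact_Icc.exists_bound_of_continuousOn (s := Set.Icc (0 : ℝ) 1)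
    hc.continuousOn
  refine Integrable.of_bound hc.aestronglyMeasurable M ?_
  filter_upwards [measure_eq_zero_iff_ae_notMem.1 hμ] with x hx
  exact hM x (by simpa using hx)

lemma bddBelow_quantization_errors (μ : Measure ℝ) (n : ℕ) (r : ℝ) :
    BddBelow ((fun α : Finset ℝ => ∫ x, Metric.infDist x (α : Set ℝ) ^ r ∂μ) ''
      {α : Finset ℝ | α.Nonempty ∧ α.card ≤ n}) := by
  refine ⟨0, ?_⟩
  rintro _ ⟨α, -, rfl⟩
  exact integral_nonneg fun x => Real.rpow_nonneg infDist_nonneg _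

lemma Vnr_le {μ : Measure ℝ} {n : ℕ} {r : ℝ} {α : Finset ℝ} (hα : α.Nonempty)
    (hn : α.card ≤ n) : Vnr μ n r ≤ ∫ x, infDist x (α : Set ℝ) ^ r ∂μ :=
  csInf_le (bddBelow_quantization_errors μ n r) ⟨α, ⟨hα, hn⟩, rfl⟩

/-- An upper bound for the mass of balls bounds the quantization error from below. -/
lemma exists_le_Vnr {μ : Measure ℝ} [IsProbabilityMeasure μ] (hμ : μ (Set.Icc 0 1)ᶜ = 0)
    {r h C : ℝ} (hr : 0 < r) (hh : 0 < h) (hC : 0 < C)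
    (hball : ∀ x ρ : ℝ, 0 < ρ → μ.real (closedBall x ρ) ≤ C * ρ ^ h) :
    ∃ c : ℝ, 0 < c ∧ ∀ n : ℕ, 1 ≤ n → c * (n : ℝ) ^ (-(r / h)) ≤ Vnr μ n r := by
  refine ⟨(2 * C) ^ (-(r / h)) / 2, by positivity, fun n hn => ?_⟩
  have hn0 : (0 : ℝ) < n := by exact_mod_cast hn
  refine le_csInf ⟨_, {0}, by simpa using hn, rfl⟩ ?_
  rintro _ ⟨α, ⟨hα, hcard⟩, rfl⟩
  set ρ : ℝ := (2 * C * n) ^ (-(1 / h)) with hρ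
  have hρ0 : 0 < ρ := by positivity
  have hρh : C * ρ ^ h * n = 1 / 2 := by
    rw [hρ, ← Real.rpow_mul (by positivity), show -(1 / h) * h = -1 by field_simp,
      Real.rpow_neg_one]
    field_simp
  have hρr : ρ ^ r = (2 * C) ^ (-(r / h)) * (n : ℝ) ^ (-(r / h)) := by
    rw [hρ, ← Real.rpow_mul (by positivity), ← Real.mul_rpow (by positivity) hn0.le]
    congr 1
    ring
  have hcover : {x | ρ < infDist x (α : Set ℝ)}ᶜ ⊆ ⋃ a ∈ α, closedBall a ρ := by
    intro x hx
    obtain ⟨a, ha, hxa⟩ := α.finite_toSet.isCompact.exists_infDist_eq_dist hα x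
    exact Set.mem_iUnion₂.2 ⟨a, ha, mem_closedBall.2 (hxa.symm.trans_le (not_lt.1 hx))⟩
  have hm : MeasurableSet {x | ρ < infDist x (α : Set ℝ)} :=
    measurableSet_lt measurable_const (continuous_infDist_pt _).measurable
  have h1 : μ.real {x | ρ < infDist x (α : Set ℝ)}ᶜ ≤ 1 / 2 := by
    calc _ ≤ μ.real (⋃ a ∈ α, closedBall a ρ) := measureReal_mono hcover (measure_ne_top _ _)
      _ ≤ ∑ a ∈ α, μ.real (closedBall a ρ) := measureReal_biUnion_finset_le _ _
      _ ≤ ∑ _a ∈ α, C * ρ ^ h := Finset.sum_le_sum fun a _ => hball a ρ hρ0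
      _ = C * ρ ^ h * α.card := by rw [Finset.sum_const, nsmul_eq_mul, mul_comm]
      _ ≤ C * ρ ^ h * n := by gcongr
      _ = 1 / 2 := hρh
  rw [probReal_compl_eq_one_sub hm] at h1
  have h2 : μ.real {x | ρ < infDist x (α : Set ℝ)} ≤
      μ.real {x | ρ ^ r ≤ infDist x (α : Set ℝ) ^ r} :=
    measureReal_mono fun x hx => Real.rpow_le_rpow hρ0.le (le_of_lt hx) hr.le
  have h3 := mul_meas_ge_le_integral_of_nonneg
    (Filter.Eventually.of_forall fun x => Real.rpow_nonneg infDist_nonneg r)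
    (integrable_infDist_rpow hμ hr (α : Set ℝ)) (ρ ^ r)
  calc _ = ρ ^ r * (1 / 2) := by rw [hρr]; ring
    _ ≤ ρ ^ r * μ.real {x | ρ ^ r ≤ infDist x (α : Set ℝ) ^ r} := by
      gcongr
      linarith
    _ ≤ _ := h3

/-- A finite `ε`-net of `s` whose cardinality is controlled by the mass of the balls centered
in `s`. -/
lemma exists_finset_net {μ : Measure ℝ} [IsProbabilityMeasure μ] {s : Set ℝ} {ε m : ℝ}
    (hm : 0 < m) (hball : ∀ x ∈ s, m ≤ μ.real (ball x (ε / 2))) :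
    ∃ α : Finset ℝ, α.card * m ≤ 1 ∧ ∀ x ∈ s, ∃ a ∈ α, dist x a < ε := by
  let S : Set ℕ := {k | ∃ α : Finset ℝ, α.card = k ∧ (α : Set ℝ) ⊆ s ∧
    (α : Set ℝ).Pairwise fun x y => ε ≤ dist x y}
  have hcard : ∀ α : Finset ℝ, (α : Set ℝ) ⊆ s →
      (α : Set ℝ).Pairwise (fun x y => ε ≤ dist x y) → α.card * m ≤ 1 := by
    intro α hα hsep
    have hdisj : (α : Set ℝ).PairwiseDisjoint fun x => ball x (ε / 2) := fun x hx y hy hxy =>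
      ball_disjoint_ball (by linarith [hsep hx hy hxy])
    calc (α.card : ℝ) * m = ∑ _x ∈ α, m := by rw [Finset.sum_const, nsmul_eq_mul]
      _ ≤ ∑ x ∈ α, μ.real (ball x (ε / 2)) := Finset.sum_le_sum fun x hx => hball x (hα hx)
      _ = μ.real (⋃ x ∈ α, ball x (ε / 2)) :=
        (measureReal_biUnion_finset hdisj fun _ _ => measurableSet_ball).symm
      _ ≤ 1 := measureReal_le_one
  have hbdd : BddAbove S := by
    refine ⟨⌈m⁻¹⌉₊, ?_⟩
    rintro _ ⟨α, rfl, hα, hsep⟩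
    have := hcard α hα hsep
    rw [← le_div_iff₀ hm, one_div] at this
    exact_mod_cast this.trans (Nat.le_ceil _)
  obtain ⟨α, hk, hα, hsep⟩ := Nat.sSup_mem (s := S) ⟨0, ∅, by simp⟩ hbdd
  refine ⟨α, hcard α hα hsep, fun x hx => ?_⟩
  by_contra! hfar
  have hε : 0 < ε := by
    by_contra! hε
    have := hball x hx
    rw [ball_eq_empty.2 (by linarith), measureReal_empty] at this
    linarith
  have hxα : x ∉ α := fun hxα => by
    have := hfar x hxα
    rw [dist_self] at this
    linarith
  have hmem : α.card + 1 ∈ S := by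
    refine ⟨insert x α, Finset.card_insert_of_notMem hxα, ?_, ?_⟩
    · rw [Finset.coe_insert]
      exact Set.insert_subset hx hα
    · rw [Finset.coe_insert]
      refine hsep.insert fun y hy _ => ⟨hfar y hy, ?_⟩
      rw [dist_comm]
      exact hfar y hy
  have := le_csSup hbdd hmem
  omega

/-- A lower bound for the mass of balls centered in a set of full measure bounds the quantization
error from above. -/
lemma exists_Vnr_le {μ : Measure ℝ} [IsProbabilityMeasure μ] {E : Set ℝ} (hμ : μ Eᶜ = 0)
    {r h C : ℝ} (hr : 0 < r) (hh : 0 < h) (hC : 0 < C)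
    (hball : ∀ x ∈ E, ∀ ρ : ℝ, 0 < ρ → ρ ≤ 1 → C * ρ ^ h ≤ μ.real (ball x ρ)) :
    ∃ c : ℝ, 0 < c ∧ ∀ᶠ n : ℕ in atTop, Vnr μ n r ≤ c * (n : ℝ) ^ (-(r / h)) := by
  refine ⟨(2 * C ^ (-(1 / h))) ^ r, by positivity, ?_⟩
  filter_upwards [eventually_ge_atTop 1, eventually_ge_atTop ⌈C⁻¹⌉₊] with n hn hn'
  have hn0 : (0 : ℝ) < n := by exact_mod_cast hn
  have hCn : 1 ≤ C * n := by
    have := (Nat.le_ceil _).trans (Nat.cast_le (α := ℝ).2 hn')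
    rwa [inv_le_iff_one_le_mul₀' hC] at this
  set ρ : ℝ := (C * n) ^ (-(1 / h)) with hρ
  have hρ0 : 0 < ρ := by positivity
  have hρ1 : ρ ≤ 1 := Real.rpow_le_one_of_one_le_of_nonpos hCn (by simp [hh.le])
  have hρh : C * ρ ^ h = (n : ℝ)⁻¹ := by
    rw [hρ, ← Real.rpow_mul (by positivity), show -(1 / h) * h = -1 by field_simp,
      Real.rpow_neg_one]
    field_simp
  obtain ⟨α, hcard, hnet⟩ := exists_finset_net (μ := μ) (s := E) (ε := 2 * ρ)
    (inv_pos.2 hn0) (fun x hx => by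
      rw [mul_div_cancel_left₀ _ two_ne_zero, ← hρh]
      exact hball x hx ρ hρ0 hρ1)
  have hαn : α.card ≤ n := by
    rw [← div_eq_mul_inv, div_le_one hn0] at hcard
    exact_mod_cast hcard
  have hEne : E.Nonempty := by
    by_contra hE
    rw [Set.not_nonempty_iff_eq_empty.1 hE] at hμ
    simp at hμ
  obtain ⟨x₀, hx₀⟩ := hEne
  obtain ⟨a₀, ha₀, -⟩ := hnet x₀ hx₀
  refine (Vnr_le ⟨a₀, ha₀⟩ hαn).trans ?_
  have hbound : ∀ᵐ x ∂μ, infDist x (α : Set ℝ) ^ r ≤ (2 * ρ) ^ r := by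
    filter_upwards [measure_eq_zero_iff_ae_notMem.1 hμ] with x hx
    obtain ⟨a, ha, hxa⟩ := hnet x (by simpa using hx)
    exact Real.rpow_le_rpow infDist_nonneg ((infDist_le_dist_of_mem ha).trans hxa.le) hr.le
  calc _ ≤ ∫ _x, (2 * ρ) ^ r ∂μ :=
        integral_mono_of_nonneg (Filter.Eventually.of_forall fun x =>
          Real.rpow_nonneg infDist_nonneg r) (integrable_const _) hbound
    _ = (2 * ρ) ^ r := by simp
    _ = _ := by
      rw [hρ, Real.mul_rpow hC.le hn0.le, ← mul_assoc, Real.mul_rpow (by positivity)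
        (by positivity), ← Real.rpow_mul hn0.le]
      congr 2
      ring

lemma tendsto_mul_log_div_neg_log {V : ℕ → ℝ} {r s c C : ℝ} (hs : 0 < s)
    (hc : 0 < c) (hC : 0 < C) (hlow : ∀ᶠ n : ℕ in atTop, c * (n : ℝ) ^ (-s) ≤ V n)
    (hup : ∀ᶠ n : ℕ in atTop, V n ≤ C * (n : ℝ) ^ (-s)) :
    Tendsto (fun n : ℕ => r * Real.log n / (-Real.log (V n))) atTop (nhds (r / s)) := by
  have hlog : Tendsto (fun n : ℕ => Real.log n) atTop atTop :=
    Real.tendsto_log_atTop.comp tendsto_natCast_atTop_atTop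
  have hcst : ∀ a : ℝ, Tendsto (fun n : ℕ => a / Real.log n - s) atTop (nhds (-s)) := fun a => by
    simpa using (hlog.const_div_atTop a).sub_const s
  have hval : ∀ a : ℝ, 0 < a → ∀ n : ℕ, 2 ≤ n →
      Real.log (a * (n : ℝ) ^ (-s)) / Real.log n = a.log / Real.log n - s := by
    intro a ha n hn
    have hn0 : (0 : ℝ) < n := by positivity
    have hl : 0 < Real.log n := Real.log_pos (by exact_mod_cast hn)
    rw [Real.log_mul ha.ne' (by positivity), Real.log_rpow hn0]
    field_simp
    ring
  have hV : Tendsto (fun n : ℕ => Real.log (V n) / Real.log n) atTop (nhds (-s)) := by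
    refine tendsto_of_tendsto_of_tendsto_of_le_of_le' (hcst c.log) (hcst C.log) ?_ ?_
    · filter_upwards [hlow, eventually_ge_atTop 2] with n h1 hn
      have hl : 0 < Real.log n := Real.log_pos (by exact_mod_cast hn)
      rw [← hval c hc n hn]
      have : (0 : ℝ) < n := by positivity
      gcongr
    · filter_upwards [hlow, hup, eventually_ge_atTop 2] with n h1 h2 hn
      have hl : 0 < Real.log n := Real.log_pos (by exact_mod_cast hn)
      have : (0 : ℝ) < n := by positivity
      rw [← hval C hC n hn]
      have : 0 < V n := lt_of_lt_of_le (by positivity) h1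
      gcongr
  have hlim := (tendsto_const_nhds (x := r)).div hV.neg (by simpa using hs.ne')
  rw [neg_neg] at hlim
  refine hlim.congr' ?_
  filter_upwards [eventually_ge_atTop 2] with n hn
  have hl : 0 < Real.log n := Real.log_pos (by exact_mod_cast hn)
  rw [Pi.div_apply, ← neg_div, div_div_eq_mul_div]

/-- Uniformly comparable partition functions have the same exponential growth rate. -/
lemma tendsto_log_sum_iff_of_comparable {ι : ℕ → Type*} [∀ n, Fintype (ι n)]
    [∀ n, Nonempty (ι n)] {u v : ∀ n, ι n → ℝ} {K ℓ : ℝ}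
    (hu : ∀ n, 1 ≤ n → ∀ σ, 0 < u n σ) (hv : ∀ n, 1 ≤ n → ∀ σ, 0 < v n σ)
    (huv : ∀ n, 1 ≤ n → ∀ σ, u n σ ≤ Real.exp K * v n σ)
    (hvu : ∀ n, 1 ≤ n → ∀ σ, v n σ ≤ Real.exp K * u n σ) :
    Tendsto (fun n : ℕ => (1 / (n : ℝ)) * Real.log (∑ σ, u n σ)) atTop (nhds ℓ) ↔
      Tendsto (fun n : ℕ => (1 / (n : ℝ)) * Real.log (∑ σ, v n σ)) atTop (nhds ℓ) := by
  have key : ∀ {u v : ∀ n, ι n → ℝ}, (∀ n, 1 ≤ n → ∀ σ, 0 < u n σ) →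
      (∀ n, 1 ≤ n → ∀ σ, 0 < v n σ) → (∀ n, 1 ≤ n → ∀ σ, u n σ ≤ Real.exp K * v n σ) →
      ∀ n, 1 ≤ n → Real.log (∑ σ, u n σ) - Real.log (∑ σ, v n σ) ≤ K := by
    intro u v hu hv huv n hn
    have hu' : 0 < ∑ σ, u n σ := Finset.sum_pos (fun σ _ => hu n hn σ) Finset.univ_nonempty
    have hv' : 0 < ∑ σ, v n σ := Finset.sum_pos (fun σ _ => hv n hn σ) Finset.univ_nonempty
    have h1 : ∑ σ, u n σ ≤ Real.exp K * ∑ σ, v n σ := by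
      rw [Finset.mul_sum]
      exact Finset.sum_le_sum fun σ _ => huv n hn σ
    have h2 := Real.log_le_log hu' h1
    rw [Real.log_mul (Real.exp_pos K).ne' hv'.ne', Real.log_exp] at h2
    linarith
  refine tendsto_iff_of_dist ?_
  refine squeeze_zero' (Filter.Eventually.of_forall fun n => dist_nonneg) ?_
    (tendsto_const_div_atTop_nhds_zero_nat K)
  filter_upwards [eventually_ge_atTop 1] with n hn
  have hn0 : (0 : ℝ) < n := by exact_mod_cast hn
  rw [Real.dist_eq, ← mul_sub, abs_mul, abs_of_pos (by positivity : (0 : ℝ) < 1 / n),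
    div_mul_eq_mul_div, one_mul]
  gcongr
  exact abs_sub_le_iff.2 ⟨key hu hv huv n hn, key hv hu hvu n hn⟩

namespace CookieCutter

variable (cc : CookieCutter)

lemma nonempty_words (n : ℕ) : Nonempty (Fin n → Fin cc.N) :=
  ⟨fun _ => ⟨0, by have := cc.hN; omega⟩⟩

/-- The pressure is strictly decreasing because words contract uniformly. -/
lemma pressure_strictAnti {Q : ℝ → ℝ}
    (hQ : ∀ t : ℝ, Tendsto (fun k : ℕ => (1 / (k : ℝ)) * Real.log
        (∑ σ : Fin k → Fin cc.N, cc.φnorm (List.ofFn σ) ^ t)) atTop (nhds (Q t))) :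
    StrictAnti Q := by
  intro t t' htt'
  have hlb : 0 < Real.log cc.b := Real.log_pos cc.hb1
  have hle : Q t' ≤ Q t - (t' - t) * Real.log cc.b := by
    refine le_of_tendsto_of_tendsto (hQ t') ((hQ t).sub_const _) ?_
    filter_upwards [eventually_ge_atTop 1] with k hk
    have hk0 : (0 : ℝ) < k := by exact_mod_cast hk
    have := cc.nonempty_words k
    have hS : ∀ t : ℝ, 0 < ∑ σ : Fin k → Fin cc.N, cc.φnorm (List.ofFn σ) ^ t := fun t =>
      Finset.sum_pos (fun σ _ => Real.rpow_pos_of_pos (cc.φnorm_pos _) t) Finset.univ_nonempty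
    have h1 : ∑ σ : Fin k → Fin cc.N, cc.φnorm (List.ofFn σ) ^ t' ≤
        (∑ σ : Fin k → Fin cc.N, cc.φnorm (List.ofFn σ) ^ t) *
          (cc.b⁻¹ ^ k) ^ (t' - t) := by
      rw [Finset.sum_mul]
      refine Finset.sum_le_sum fun σ _ => ?_
      have hp := cc.φnorm_pos (List.ofFn σ)
      have h2 : cc.φnorm (List.ofFn σ) ^ (t' - t) ≤ (cc.b⁻¹ ^ k) ^ (t' - t) :=
        Real.rpow_le_rpow hp.le (by simpa using cc.φnorm_le_pow (List.ofFn σ)) (by linarith)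
      calc _ = cc.φnorm (List.ofFn σ) ^ t * cc.φnorm (List.ofFn σ) ^ (t' - t) := by
            rw [← Real.rpow_add hp]; congr 1; ring
        _ ≤ _ := by gcongr
    have hbk : 0 < cc.b⁻¹ ^ k := pow_pos (inv_pos.2 cc.b_pos) k
    have h3 := Real.log_le_log (hS t') h1
    rw [Real.log_mul (hS t).ne' (by positivity), Real.log_rpow hbk, Real.log_pow,
      Real.log_inv] at h3
    calc _ ≤ 1 / (k : ℝ) * (Real.log (∑ σ : Fin k → Fin cc.N, cc.φnorm (List.ofFn σ) ^ t) +
          (t' - t) * (k * -Real.log cc.b)) := by gcongr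
      _ = _ := by field_simp; ring
  nlinarith [mul_pos (sub_pos.2 htt') hlb]

lemma rpow_le_exp_abs_mul {a x K q : ℝ} (ha : 0 < a) (hx : 0 < x)
    (h1 : a ≤ Real.exp K * x) (h2 : x ≤ Real.exp K * a) :
    a ^ q ≤ Real.exp (K * |q|) * x ^ q := by
  have hl1 := Real.log_le_log ha h1
  have hl2 := Real.log_le_log hx h2
  rw [Real.log_mul (Real.exp_pos K).ne' hx.ne', Real.log_exp] at hl1
  rw [Real.log_mul (Real.exp_pos K).ne' ha.ne', Real.log_exp] at hl2
  rw [Real.rpow_def_of_pos ha, Real.rpow_def_of_pos hx, ← Real.exp_add, Real.exp_le_exp]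
  have h3 : |Real.log a - Real.log x| ≤ K := abs_sub_le_iff.2 ⟨by linarith, by linarith⟩
  have h4 : (Real.log a - Real.log x) * q ≤ K * |q| :=
    (le_abs_self _).trans (by rw [abs_mul]; gcongr)
  linarith

lemma exists_gibbs_comparison {μ : Measure ℝ} {h : ℝ} (hh : 0 < h) (hμ : cc.IsGibbsLike μ h) :
    ∃ K : ℝ, ∀ σ : List (Fin cc.N), σ ≠ [] → 0 < (μ (cc.Jc σ)).toReal ∧
      (μ (cc.Jc σ)).toReal ≤ Real.exp K * cc.φnorm σ ^ h ∧
      cc.φnorm σ ^ h ≤ Real.exp K * (μ (cc.Jc σ)).toReal := by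
  have hxi := cc.xi_pos
  have heta : 0 < cc.eta h := Real.rpow_pos_of_pos hxi _
  have hx1 : 1 ≤ cc.xi ^ h := Real.one_le_rpow cc.one_le_xi hh.le
  refine ⟨Real.log (cc.eta h * cc.xi ^ h), fun σ hσ => ?_⟩
  have hp : 0 < cc.φnorm σ ^ h := Real.rpow_pos_of_pos (cc.φnorm_pos σ) h
  have hlow := cc.le_gibbs hh hμ hσ
  rw [Real.exp_log (by positivity)]
  refine ⟨lt_of_lt_of_le (by positivity) hlow, (cc.gibbs_le hh hμ hσ).trans ?_, ?_⟩
  · gcongr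
    exact le_mul_of_one_le_right heta.le hx1
  · rwa [inv_mul_le_iff₀ (by positivity)] at hlow

lemma ofFn_ne_nil {n : ℕ} (hn : 1 ≤ n) (σ : Fin n → Fin cc.N) : List.ofFn σ ≠ [] := by
  rw [Ne, List.ofFn_eq_nil_iff]
  omega

/-- The pressure of a Gibbs-like measure reduces to the pressure of the geometric potential. -/
lemma tendsto_mixed_pressure_iff {μ : Measure ℝ} {h : ℝ} (hh : 0 < h)
    (hμ : cc.IsGibbsLike μ h) (q t : ℝ) {ℓ : ℝ} :
    Tendsto (fun k : ℕ => (1 / (k : ℝ)) * Real.log (∑ σ : Fin k → Fin cc.N,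
        (μ (cc.Jc (List.ofFn σ))).toReal ^ q * cc.φnorm (List.ofFn σ) ^ t)) atTop (nhds ℓ) ↔
      Tendsto (fun k : ℕ => (1 / (k : ℝ)) * Real.log (∑ σ : Fin k → Fin cc.N,
        cc.φnorm (List.ofFn σ) ^ (h * q + t))) atTop (nhds ℓ) := by
  obtain ⟨K, hK⟩ := cc.exists_gibbs_comparison hh hμ
  have := cc.nonempty_words
  have hsplit : ∀ σ : List (Fin cc.N),
      cc.φnorm σ ^ (h * q + t) = (cc.φnorm σ ^ h) ^ q * cc.φnorm σ ^ t := fun σ => by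
    rw [Real.rpow_add (cc.φnorm_pos σ), Real.rpow_mul (cc.φnorm_pos σ).le]
  have hpos : ∀ (σ : List (Fin cc.N)) (t : ℝ), 0 < cc.φnorm σ ^ t := fun σ t =>
    Real.rpow_pos_of_pos (cc.φnorm_pos σ) t
  refine tendsto_log_sum_iff_of_comparable (ι := fun k => Fin k → Fin cc.N) (K := K * |q|)
    ?_ (fun n _ σ => hpos _ _) ?_ ?_
  · intro n hn σ
    obtain ⟨h0, -, -⟩ := hK _ (cc.ofFn_ne_nil hn σ)
    exact mul_pos (Real.rpow_pos_of_pos h0 _) (hpos _ _)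
  · intro n hn σ
    obtain ⟨h0, h1, h2⟩ := hK _ (cc.ofFn_ne_nil hn σ)
    rw [hsplit, ← mul_assoc]
    exact mul_le_mul_of_nonneg_right (rpow_le_exp_abs_mul h0 (hpos _ _) h1 h2) (hpos _ _).le
  · intro n hn σ
    obtain ⟨h0, h1, h2⟩ := hK _ (cc.ofFn_ne_nil hn σ)
    rw [hsplit, ← mul_assoc]
    exact mul_le_mul_of_nonneg_right (rpow_le_exp_abs_mul (hpos _ _) h0 h2 h1) (hpos _ _).le

end CookieCutter

theorem main_theorem (cc : CookieCutter) (Q : ℝ → ℝ)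
    (hQ : ∀ t : ℝ, Filter.Tendsto
      (fun k : ℕ => (1 / (k : ℝ)) * Real.log
        (∑ σ : Fin k → Fin cc.N, cc.φnorm (List.ofFn σ) ^ t))
      Filter.atTop (nhds (Q t)))
    (h : ℝ) (hh0 : 0 < h) (hQh : Q h = 0)
    (μ : MeasureTheory.Measure ℝ) (hμ : cc.IsGibbsLike μ h) (r : ℝ) (hr : 0 < r)
    (P : ℝ → ℝ → ℝ)
    (hP : ∀ q t : ℝ, Filter.Tendsto
      (fun k : ℕ => (1 / (k : ℝ)) * Real.log
        (∑ σ : Fin k → Fin cc.N,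
          (μ (cc.Jc (List.ofFn σ))).toReal ^ q * cc.φnorm (List.ofFn σ) ^ t))
      Filter.atTop (nhds (P q t)))
    (β : ℝ → ℝ) (hβ : ∀ q : ℝ, P q (β q) = 0) :
    (∃! κ : ℝ, 0 < κ ∧ Filter.Tendsto
      (fun n : ℕ => (1 / (n : ℝ)) * Real.log
        (∑ σ : Fin n → Fin cc.N,
          ((μ (cc.Jc (List.ofFn σ))).toReal * cc.φnorm (List.ofFn σ) ^ r) ^ (κ / (r + κ))))
      Filter.atTop (nhds 0)) ∧
    ∀ κ : ℝ, 0 < κ →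
      (Filter.Tendsto
      (fun n : ℕ => (1 / (n : ℝ)) * Real.log
        (∑ σ : Fin n → Fin cc.N,
          ((μ (cc.Jc (List.ofFn σ))).toReal * cc.φnorm (List.ofFn σ) ^ r) ^ (κ / (r + κ))))
      Filter.atTop (nhds 0)) →
      β (κ / (r + κ)) = r * (κ / (r + κ)) ∧
      κ = β (κ / (r + κ)) / (1 - κ / (r + κ)) ∧
      Filter.Tendsto (fun n : ℕ => r * Real.log n / (-Real.log (Vnr μ n r)))
        Filter.atTop (nhds κ) ∧
      ∃ C : ℝ, 0 < C ∧ ∀ᶠ n : ℕ in Filter.atTop, C ≤ (n : ℝ) * Vnr μ n r ^ (κ / r) := by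
  have hprob := hμ.1
  have hinj := (cc.pressure_strictAnti hQ).injective
  have hlim : ∀ κ : ℝ, 0 < κ → (Tendsto
      (fun n : ℕ => (1 / (n : ℝ)) * Real.log
        (∑ σ : Fin n → Fin cc.N,
          ((μ (cc.Jc (List.ofFn σ))).toReal * cc.φnorm (List.ofFn σ) ^ r) ^ (κ / (r + κ))))
      atTop (nhds 0) ↔ κ = h) := by
    intro κ hκ
    have hterm : ∀ (n : ℕ) (σ : Fin n → Fin cc.N),
        ((μ (cc.Jc (List.ofFn σ))).toReal * cc.φnorm (List.ofFn σ) ^ r) ^ (κ / (r + κ)) =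
        (μ (cc.Jc (List.ofFn σ))).toReal ^ (κ / (r + κ)) *
          cc.φnorm (List.ofFn σ) ^ (r * (κ / (r + κ))) := fun n σ => by
      rw [Real.mul_rpow ENNReal.toReal_nonneg (Real.rpow_nonneg (cc.φnorm_pos _).le _),
        Real.rpow_mul (cc.φnorm_pos _).le]
    simp only [hterm]
    rw [cc.tendsto_mixed_pressure_iff hh0 hμ]
    have hexp : h * (κ / (r + κ)) + r * (κ / (r + κ)) = h ↔ κ = h := by
      have : r + κ ≠ 0 := by positivity
      field_simp
      constructor
      · intro hk
        exact mul_left_cancel₀ hr.ne' (by linarith)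
      · rintro rfl
        ring
    rw [← hexp, ← hinj.eq_iff, hQh]
    refine ⟨fun hk => tendsto_nhds_unique (hQ _) hk, fun hk => hk ▸ hQ _⟩
  refine ⟨⟨h, ⟨hh0, (hlim h hh0).2 rfl⟩, fun κ hκ => (hlim κ hκ.1).1 hκ.2⟩, fun κ hκ hk => ?_⟩
  obtain rfl := (hlim κ hκ).1 hk
  have hrκ : r + κ ≠ 0 := by positivity
  have hβ' : β (κ / (r + κ)) = r * (κ / (r + κ)) := by
    have h1 := (cc.tendsto_mixed_pressure_iff hκ hμ (κ / (r + κ)) (β (κ / (r + κ)))).1 (hP _ _)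
    rw [hβ] at h1
    have h2 := hinj ((tendsto_nhds_unique (hQ _) h1).trans hQh.symm)
    have h3 : κ - κ * (κ / (r + κ)) = r * (κ / (r + κ)) := by field_simp; ring
    linarith
  have hsupp : μ (Set.Icc (0 : ℝ) 1)ᶜ = 0 :=
    measure_mono_null (Set.compl_subset_compl.2 cc.E_subset_Icc) hμ.2.1
  obtain ⟨C₁, hC₁, hball₁⟩ := cc.exists_measure_closedBall_le hκ hμ
  obtain ⟨C₂, hC₂, hball₂⟩ := cc.exists_le_measure_ball hκ hμ
  obtain ⟨c₁, hc₁, hV₁⟩ := exists_le_Vnr hsupp hr hκ hC₁ hball₁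
  obtain ⟨c₂, hc₂, hV₂⟩ := exists_Vnr_le hμ.2.1 hr hκ hC₂ hball₂
  refine ⟨hβ', ?_, ?_, c₁ ^ (κ / r), by positivity, ?_⟩
  · rw [hβ']
    have h1 : 1 - κ / (r + κ) = r / (r + κ) := by field_simp; ring
    rw [h1]
    field_simp
  · have h1 := tendsto_mul_log_div_neg_log (r := r) (div_pos hr hκ) hc₁ hc₂
      ((eventually_ge_atTop 1).mono hV₁) hV₂
    rwa [div_div_cancel₀ hr.ne'] at h1
  · filter_upwards [eventually_ge_atTop 1] with n hn
    have hn0 : (0 : ℝ) < n := by exact_mod_cast hn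
    have h1 : (c₁ * (n : ℝ) ^ (-(r / κ))) ^ (κ / r) = c₁ ^ (κ / r) * (n : ℝ)⁻¹ := by
      rw [Real.mul_rpow hc₁.le (by positivity), ← Real.rpow_mul hn0.le,
        show -(r / κ) * (κ / r) = -1 by field_simp, Real.rpow_neg_one]
    calc c₁ ^ (κ / r) = n * (c₁ * (n : ℝ) ^ (-(r / κ))) ^ (κ / r) := by
          rw [h1]; field_simp
      _ ≤ _ := by
          have := hV₁ n hn
          gcongr
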